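/- Let N ≥ 2, n = N−1, and ξ(θ,φ) = v(θ,φ)^{⊗n}. Then for all (θ₁,φ₁), (θ₂,φ₂) and each a ∈ {1,2,3}: ⟨ξ(θ₁,φ₁), J_a ξ(θ₂,φ₂)⟩ = (N(N+1)/(8π)) ∫₀^{2π} ∫₀^{π} x_a(θ,φ) ⟨ξ(θ₁,φ₁), ξ(θ,φ)⟩ ⟨ξ(θ,φ), ξ(θ₂,φ₂)⟩ sin θ dθ dφ. (This is the coherent-state integral representation X^a = √((N+1)/(N−1)) (N/4π) ∫_{S²} x^a |x⟩⟨x| dx of the fuzzy sphere coordinate operators, evaluated between arbitrary coherent states.) -/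

import Mathlib

open scoped BigOperators ComplexConjugate
open Matrix

noncomputable section

/-- The three Pauli matrices acting on ℂ². -/
def pauli : Fin 3 → Matrix (Fin 2) (Fin 2) ℂ :=
  ![!![0, 1; 1, 0], !![0, -Complex.I; Complex.I, 0], !![1, 0; 0, -1]]

/-- The coherent spinor v(θ,φ) = (cos(θ/2), e^{iφ} sin(θ/2)) ∈ ℂ². -/
def vcoh (θ φ : ℝ) : Fin 2 → ℂ :=
  ![(Real.cos (θ / 2) : ℂ), Complex.exp (Complex.I * (φ : ℂ)) * (Real.sin (θ / 2) : ℂ)]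

/-- The point x(θ,φ) = (sin θ cos φ, sin θ sin φ, cos θ) ∈ S² ⊂ ℝ³. -/
def xpt (θ φ : ℝ) : Fin 3 → ℝ :=
  ![Real.sin θ * Real.cos φ, Real.sin θ * Real.sin φ, Real.cos θ]

/-- The n-th tensor power u^{⊗n} of u ∈ ℂ², realized concretely as the function
    (Fin n → Fin 2) → ℂ, f ↦ ∏ i, u (f i). -/
def tpow (n : ℕ) (u : Fin 2 → ℂ) : (Fin n → Fin 2) → ℂ :=
  fun f => ∏ i, u (f i)

/-- The standard Hermitian inner product (antilinear in the first argument). -/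
def cinner {ι : Type} [Fintype ι] (ξ η : ι → ℂ) : ℂ :=
  ∑ f, conj (ξ f) * η f

/-- The angular momentum operator J_a = Σ_i 1⊗…⊗(σ_a/2)⊗…⊗1 on (ℂ²)^{⊗n},
    as a matrix acting (via `Matrix.mulVec`) on the concrete model
    (Fin n → Fin 2) → ℂ of (ℂ²)^{⊗n}. -/
def Jmat (n : ℕ) (a : Fin 3) : Matrix (Fin n → Fin 2) (Fin n → Fin 2) ℂ :=
  Matrix.of fun f g => ∑ i : Fin n, ∑ k : Fin 2,
    (pauli a (f i) k / 2) * (if Function.update f i k = g then 1 else 0)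

/-!
By the Hopf map, `x_a = ⟨v, σ_a v⟩` for the coherent spinor `v`. Inner products of tensor powers
are powers of inner products, so everything reduces to the identity
`∫ ⟨v, M v⟩ ⟨u, v⟩ⁿ ⟨v, w⟩ⁿ = 4π / ((n + 1)(n + 2)) (tr M ⟨u, w⟩ⁿ + n ⟨u, M w⟩ ⟨u, w⟩ⁿ⁻¹)`
over the sphere, for any 2 × 2 matrix `M`, applied to the traceless `σ_a`.

With `⟨v, M v⟩ = ∑ₖ conj vₖ (M v)ₖ`, the identity is an instance of the differentiated reproducing
formula `∫ f(v) conj vₖ ⟨v, w⟩ⁿ = 4π / ((n + 1)(n + 2)) ∂ₖ f(w)` for forms `f` of degree `n + 1`.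
For a monomial `f` this compares the multinomial expansion of `⟨v, w⟩ⁿ` with the moments
`∫ v^α conj v^β`: the phase integral makes distinct monomials orthogonal, and `t = sin² (θ / 2)`
turns the norms into Beta integrals.
-/

/-- The pure tensor `x₁ ⊗ ⋯ ⊗ xₙ`, realized, like `tpow`, as a function of multi-indices. -/
def pureTensor {ι κ : Type} [Fintype ι] (x : ι → κ → ℂ) : (ι → κ) → ℂ :=
  fun f => ∏ i, x i (f i)

theorem tpow_eq_pureTensor (n : ℕ) (u : Fin 2 → ℂ) : tpow n u = pureTensor fun _ => u := rfl

theorem cinner_pureTensor {ι κ : Type} [Fintype ι] [DecidableEq ι] [Fintype κ]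
    (x y : ι → κ → ℂ) :
    cinner (pureTensor x) (pureTensor y) = ∏ i, cinner (x i) (y i) := by
  simp only [cinner, pureTensor, map_prod, ← Finset.prod_mul_distrib, Fintype.prod_sum]

theorem cinner_tpow (n : ℕ) (u w : Fin 2 → ℂ) :
    cinner (tpow n u) (tpow n w) = cinner u w ^ n := by
  simp only [tpow_eq_pureTensor, cinner_pureTensor, Finset.prod_const, Finset.card_univ,
    Fintype.card_fin]

@[fun_prop]
theorem continuous_cinner_left {κ : Type} [Fintype κ] (w : κ → ℂ) :
    Continuous fun v => cinner v w := by
  unfold cinner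
  fun_prop

theorem cinner_sum_right {ι κ : Type} [Fintype κ] (s : Finset ι) (ξ : κ → ℂ) (η : ι → κ → ℂ) :
    cinner ξ (∑ i ∈ s, η i) = ∑ i ∈ s, cinner ξ (η i) := by
  simp only [cinner, Finset.sum_apply, Finset.mul_sum]
  exact Finset.sum_comm

theorem cinner_smul_right {κ : Type} [Fintype κ] (c : ℂ) (ξ η : κ → ℂ) :
    cinner ξ (c • η) = c * cinner ξ η := by
  simp only [cinner, Pi.smul_apply, smul_eq_mul, Finset.mul_sum, mul_left_comm]

theorem Jmat_mulVec_pureTensor (n : ℕ) (a : Fin 3) (x : Fin n → Fin 2 → ℂ) :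
    Jmat n a *ᵥ pureTensor x =
      ∑ i, pureTensor (Function.update x i ((1 / 2 : ℂ) • pauli a *ᵥ x i)) := by
  ext f
  simp only [Matrix.mulVec, dotProduct, Jmat, Matrix.of_apply, Finset.sum_mul, Finset.sum_apply]
  rw [Finset.sum_comm]
  refine Finset.sum_congr rfl fun i _ => ?_
  have prod_update_index (k : Fin 2) : ∏ l, x l (Function.update f i k l) =
      x i k * ∏ l ∈ Finset.univ \ {i}, x l (f l) := by
    simp only [Function.apply_update (fun l => x l),
      Finset.prod_update_of_mem (Finset.mem_univ i)]
  have prod_update_factor (y : Fin 2 → ℂ) : ∏ l, Function.update x i y l (f l) =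
      y (f i) * ∏ l ∈ Finset.univ \ {i}, x l (f l) := by
    simp only [Function.apply_update (fun l (z : Fin 2 → ℂ) => z (f l)),
      Finset.prod_update_of_mem (Finset.mem_univ i)]
  rw [Finset.sum_comm]
  simp only [pureTensor, mul_ite, mul_one, mul_zero, ite_mul, zero_mul, Finset.sum_ite_eq,
    Finset.mem_univ, if_true, prod_update_index, prod_update_factor, Pi.smul_apply, smul_eq_mul,
    Matrix.mulVec, dotProduct, Finset.mul_sum, Finset.sum_mul]
  refine Finset.sum_congr rfl fun k _ => ?_
  ring

theorem cinner_tpow_Jmat_mulVec_tpow (n : ℕ) (a : Fin 3) (u w : Fin 2 → ℂ) :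
    cinner (tpow n u) (Jmat n a *ᵥ tpow n w) =
      n / 2 * cinner u (pauli a *ᵥ w) * cinner u w ^ (n - 1) := by
  have summand (i : Fin n) :
      cinner (tpow n u)
          (pureTensor (Function.update (fun _ => w) i ((1 / 2 : ℂ) • pauli a *ᵥ w))) =
        1 / 2 * cinner u (pauli a *ᵥ w) * cinner u w ^ (n - 1) := by
    simp only [tpow_eq_pureTensor, cinner_pureTensor, Function.apply_update (fun _ => cinner u),
      Finset.prod_update_of_mem (Finset.mem_univ i), cinner_smul_right, Finset.prod_const,
      Finset.card_sdiff, Finset.inter_univ, Finset.card_singleton, Finset.card_univ,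
      Fintype.card_fin]
  rw [tpow_eq_pureTensor n w, Jmat_mulVec_pureTensor, cinner_sum_right,
    Finset.sum_congr rfl fun i _ => summand i, Finset.sum_const, Finset.card_univ,
    Fintype.card_fin, nsmul_eq_mul]
  ring

theorem trace_pauli (a : Fin 3) : (pauli a).trace = 0 := by
  fin_cases a <;> simp [pauli, Matrix.trace_fin_two]

theorem vcoh_zero (θ φ : ℝ) : vcoh θ φ 0 = (Real.cos (θ / 2) : ℂ) := rfl

theorem vcoh_one (θ φ : ℝ) :
    vcoh θ φ 1 = Complex.exp (Complex.I * φ) * (Real.sin (θ / 2) : ℂ) := rfl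

theorem conj_vcoh_zero (θ φ : ℝ) : conj (vcoh θ φ 0) = (Real.cos (θ / 2) : ℂ) :=
  Complex.conj_ofReal _

theorem conj_vcoh_one (θ φ : ℝ) :
    conj (vcoh θ φ 1) = Complex.exp (-(Complex.I * φ)) * (Real.sin (θ / 2) : ℂ) := by
  rw [vcoh_one, map_mul, Complex.conj_ofReal, ← Complex.exp_conj, map_mul, Complex.conj_I,
    Complex.conj_ofReal, neg_mul]

theorem continuous_uncurry_vcoh : Continuous (Function.uncurry vcoh) := by
  refine continuous_pi (Fin.forall_fin_two.mpr ⟨?_, ?_⟩)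
  · simp only [Function.uncurry_def, vcoh_zero]
    fun_prop
  · simp only [Function.uncurry_def, vcoh_one]
    fun_prop

theorem xpt_eq_cinner_vcoh_pauli (θ φ : ℝ) (a : Fin 3) :
    (xpt θ φ a : ℂ) = cinner (vcoh θ φ) (pauli a *ᵥ vcoh θ φ) := by
  have sin_eq : Complex.sin θ = 2 * Complex.sin (θ / 2) * Complex.cos (θ / 2) := by
    rw [← Complex.sin_two_mul, mul_div_cancel₀ _ two_ne_zero]
  have cos_eq : Complex.cos θ = Complex.cos (θ / 2) ^ 2 - Complex.sin (θ / 2) ^ 2 := by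
    rw [← Complex.cos_two_mul', mul_div_cancel₀ _ two_ne_zero]
  have exp_eq : Complex.exp (Complex.I * φ) = Complex.cos φ + Complex.sin φ * Complex.I := by
    rw [mul_comm, Complex.exp_mul_I]
  have exp_neg_eq :
      Complex.exp (-(Complex.I * φ)) = Complex.cos φ - Complex.sin φ * Complex.I := by
    rw [mul_comm, ← neg_mul, Complex.exp_mul_I, Complex.cos_neg, Complex.sin_neg, neg_mul,
      sub_eq_add_neg]
  have I_sq := Complex.I_sq
  have sin_sq_add_cos_sq := Complex.sin_sq_add_cos_sq φ
  rw [cinner, Fin.sum_univ_two, conj_vcoh_zero, conj_vcoh_one]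
  simp only [Matrix.mulVec, dotProduct, Fin.sum_univ_two, vcoh_zero, vcoh_one, exp_eq, exp_neg_eq]
  fin_cases a <;> simp only [xpt, pauli, Fin.zero_eta, Fin.mk_one, Fin.reduceFinMk, Fin.isValue,
    Matrix.cons_val, Matrix.of_apply, Matrix.cons_val', Matrix.cons_val_zero, Matrix.cons_val_one,
    Matrix.cons_val_fin_one, Complex.ofReal_mul, Complex.ofReal_sin, Complex.ofReal_cos,
    Complex.ofReal_div, Complex.ofReal_ofNat, sin_eq, cos_eq]
  · ring
  · linear_combination
      2 * Complex.sin (θ / 2) * Complex.cos (θ / 2) * Complex.sin φ * I_sq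
  · linear_combination Complex.sin (θ / 2) ^ 2 *
      (sin_sq_add_cos_sq - Complex.sin φ ^ 2 * I_sq)

/-- The integral over the unit sphere of a function `F` of the coherent spinor, in the
coordinates `θ`, `φ` and with the area element `sin θ dθ dφ`. -/
def sphereIntegral (F : (Fin 2 → ℂ) → ℂ) : ℂ :=
  ∫ φ in (0 : ℝ)..(2 * Real.pi), ∫ θ in (0 : ℝ)..Real.pi, F (vcoh θ φ) * (Real.sin θ : ℂ)

theorem sphereIntegral_const_mul (c : ℂ) (F : (Fin 2 → ℂ) → ℂ) :
    sphereIntegral (fun v => c * F v) = c * sphereIntegral F := by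
  simp only [sphereIntegral, mul_assoc, intervalIntegral.integral_const_mul]

theorem sphereIntegral_finsetSum {ι : Type*} (s : Finset ι) {F : ι → (Fin 2 → ℂ) → ℂ}
    (hF : ∀ i ∈ s, Continuous (F i)) :
    sphereIntegral (fun v => ∑ i ∈ s, F i v) = ∑ i ∈ s, sphereIntegral (F i) := by
  have continuous_integrand (i) (hi : i ∈ s) :
      Continuous (Function.uncurry fun φ θ : ℝ => F i (vcoh θ φ) * (Real.sin θ : ℂ)) := by
    have hv : Continuous fun x : ℝ × ℝ => vcoh x.2 x.1 :=
      continuous_uncurry_vcoh.comp continuous_swap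
    have := (hF i hi).comp hv
    simp only [Function.uncurry_def]
    fun_prop
  simp only [sphereIntegral, Finset.sum_mul]
  rw [← intervalIntegral.integral_finsetSum fun i hi =>
    (intervalIntegral.continuous_parametric_intervalIntegral_of_continuous'
      (continuous_integrand i hi) _ _).intervalIntegrable _ _]
  congr 1
  ext φ
  exact intervalIntegral.integral_finsetSum fun i hi =>
    ((continuous_integrand i hi).comp (Continuous.prodMk_right φ)).intervalIntegrable _ _

theorem integral_exp_int_mul_I (m : ℤ) :
    ∫ φ in (0 : ℝ)..(2 * Real.pi), Complex.exp (m * Complex.I * φ) =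
      if m = 0 then 2 * (Real.pi : ℂ) else 0 := by
  split_ifs with hm
  · simp [hm]
  · have period : Complex.exp (m * Complex.I * ((2 * Real.pi : ℝ) : ℂ)) = 1 :=
      Complex.exp_eq_one_iff.mpr ⟨m, by push_cast; ring⟩
    rw [integral_exp_mul_complex (mul_ne_zero (Int.cast_ne_zero.mpr hm) Complex.I_ne_zero),
      period]
    simp

theorem integral_pow_mul_one_sub_pow (a b : ℕ) :
    ∫ t in (0 : ℝ)..1, (t : ℂ) ^ a * (1 - (t : ℂ)) ^ b =
      a.factorial * b.factorial / (a + b + 1).factorial := by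
  have re_pos (c : ℕ) : 0 < ((c : ℂ) + 1).re := by exact_mod_cast c.succ_pos
  have gamma_mul_gamma := Complex.Gamma_mul_Gamma_eq_betaIntegral (re_pos a) (re_pos b)
  have arg_sum : (a : ℂ) + 1 + (b + 1) = ((a + b + 1 : ℕ) : ℂ) + 1 := by push_cast; ring
  simp only [arg_sum, Complex.Gamma_nat_eq_factorial, Complex.betaIntegral, add_sub_cancel_right,
    Complex.cpow_natCast] at gamma_mul_gamma
  rw [gamma_mul_gamma, mul_div_cancel_left₀ _ (by exact_mod_cast Nat.factorial_ne_zero _)]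

theorem integral_cos_half_pow_mul_sin_half_pow_mul_sin (a b : ℕ) :
    ∫ θ in (0 : ℝ)..Real.pi, (Real.cos (θ / 2) : ℂ) ^ (2 * a) *
        (Real.sin (θ / 2) : ℂ) ^ (2 * b) * (Real.sin θ : ℂ) =
      2 * (a.factorial * b.factorial / (a + b + 1).factorial) := by
  have hasDerivAt_sin_half_sq (θ : ℝ) :
      HasDerivAt (fun θ => Real.sin (θ / 2) ^ 2) (Real.sin θ / 2) θ := by
    refine ((((hasDerivAt_id θ).div_const 2).sin).pow 2).congr_deriv ?_
    have := Real.sin_two_mul (θ / 2)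
    rw [mul_div_cancel₀ θ two_ne_zero] at this
    simp only [this, Nat.cast_ofNat, id_eq, Nat.add_one_sub_one, pow_one]
    ring
  have subst := intervalIntegral.integral_deriv_smul_comp (a := 0) (b := Real.pi)
    (g := fun t : ℝ => (t : ℂ) ^ b * (1 - (t : ℂ)) ^ a)
    (fun θ _ => hasDerivAt_sin_half_sq θ) (by fun_prop) (by fun_prop)
  simp only [zero_div, Real.sin_zero, Real.sin_pi_div_two, one_pow, ne_eq, OfNat.ofNat_ne_zero,
    not_false_eq_true, zero_pow, integral_pow_mul_one_sub_pow] at subst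
  rw [mul_comm (a.factorial : ℂ), add_comm a, ← subst, ← intervalIntegral.integral_const_mul]
  congr 1
  ext θ
  have one_sub_sin_sq : (1 : ℂ) - (Real.sin (θ / 2) : ℂ) ^ 2 = (Real.cos (θ / 2) : ℂ) ^ 2 := by
    exact_mod_cast (Real.cos_sq' (θ / 2)).symm
  simp only [Function.comp_apply, Complex.real_smul, Complex.ofReal_pow, one_sub_sin_sq, pow_mul]
  push_cast
  ring

theorem sphereIntegral_monomial_mul_conj_monomial {α β : Fin 2 → ℕ} (h : ∑ i, α i = ∑ i, β i) :
    sphereIntegral (fun v => (∏ i, v i ^ α i) * ∏ i, conj (v i) ^ β i) =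
      if α = β then
        4 * (Real.pi : ℂ) * ((∏ i, (α i).factorial : ℕ) / ((∑ i, α i + 1).factorial : ℂ))
      else 0 := by
  have separated (θ φ : ℝ) :
      (∏ i, vcoh θ φ i ^ α i) * (∏ i, conj (vcoh θ φ i) ^ β i) * (Real.sin θ : ℂ) =
        Complex.exp (((α 1 - β 1 : ℤ) : ℂ) * Complex.I * φ) *
          ((Real.cos (θ / 2) : ℂ) ^ (α 0 + β 0) * (Real.sin (θ / 2) : ℂ) ^ (α 1 + β 1) *
            (Real.sin θ : ℂ)) := by
    have phase : Complex.exp (((α 1 - β 1 : ℤ) : ℂ) * Complex.I * φ) =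
        Complex.exp (Complex.I * φ) ^ α 1 * Complex.exp (-(Complex.I * φ)) ^ β 1 := by
      rw [← Complex.exp_nat_mul, ← Complex.exp_nat_mul, ← Complex.exp_add]
      congr 1
      push_cast
      ring
    rw [phase, Fin.prod_univ_two, Fin.prod_univ_two, conj_vcoh_zero, conj_vcoh_one, vcoh_zero,
      vcoh_one]
    ring
  simp only [sphereIntegral, separated, intervalIntegral.integral_const_mul,
    intervalIntegral.integral_mul_const, integral_exp_int_mul_I]
  simp only [Fin.sum_univ_two, Fin.prod_univ_two] at h ⊢
  split_ifs with hphase hαβ hαβ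
  · subst hαβ
    rw [← two_mul, ← two_mul, integral_cos_half_pow_mul_sin_half_pow_mul_sin]
    push_cast
    ring
  · exact absurd (funext <| Fin.forall_fin_two.mpr ⟨by omega, by omega⟩) hαβ
  · exact absurd (by simp [hαβ]) hphase
  · exact zero_mul _

theorem cinner_pow {κ : Type} [Fintype κ] [DecidableEq κ] (v w : κ → ℂ) (n : ℕ) :
    cinner v w ^ n = ∑ β ∈ Finset.univ.piAntidiag n,
      Nat.multinomial Finset.univ β * (∏ i, w i ^ β i) * ∏ i, conj (v i) ^ β i := by
  simp only [cinner, Finset.sum_pow_eq_sum_piAntidiag, mul_pow, Finset.prod_mul_distrib]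
  exact Finset.sum_congr rfl fun β _ => by ring

theorem prod_pow_add_single {ι M : Type*} [Fintype ι] [DecidableEq ι] [CommMonoid M]
    (z : ι → M) (β : ι → ℕ) (k : ι) :
    ∏ i, z i ^ (β + Pi.single k 1 : ι → ℕ) i = z k * ∏ i, z i ^ β i := by
  simp only [Pi.add_apply, pow_add, Finset.prod_mul_distrib, Pi.single_apply, pow_ite, pow_one,
    pow_zero, Finset.prod_ite_eq', Finset.mem_univ, if_true, mul_comm]

theorem prod_factorial_add_single {ι : Type*} [Fintype ι] [DecidableEq ι] (β : ι → ℕ) (k : ι) :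
    ∏ i, ((β + Pi.single k 1 : ι → ℕ) i).factorial = (β k + 1) * ∏ i, (β i).factorial := by
  have factorial_add_single (i : ι) : ((β + Pi.single k 1 : ι → ℕ) i).factorial =
      (if i = k then β i + 1 else 1) * (β i).factorial := by
    split_ifs with hik
    · simp [hik, Nat.factorial_succ]
    · simp [hik]
  simp only [factorial_add_single, Finset.prod_mul_distrib, Finset.prod_ite_eq', Finset.mem_univ,
    if_true]

theorem multinomial_mul_prod_factorial_add_single_div {ι K : Type*} [Fintype ι] [DecidableEq ι]
    [Field K] [CharZero K] {n : ℕ} {γ : ι → ℕ} (hγ : ∑ i, γ i = n) (k : ι) :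
    (Nat.multinomial Finset.univ γ : K) *
        ((∏ i, ((γ + Pi.single k 1 : ι → ℕ) i).factorial : ℕ) / ((n + 2).factorial : K)) =
      (γ k + 1) / ((n + 1) * (n + 2)) := by
  have multinomial_spec : ((∏ i, (γ i).factorial : ℕ) : K) * Nat.multinomial Finset.univ γ =
      n.factorial := by
    exact_mod_cast hγ ▸ Nat.multinomial_spec Finset.univ γ
  have factorial_ne_zero : (n.factorial : K) ≠ 0 := Nat.cast_ne_zero.mpr n.factorial_ne_zero
  have succ_ne_zero : (n : K) + 1 ≠ 0 := Nat.cast_add_one_ne_zero n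
  have add_two_ne_zero : (n : K) + 2 ≠ 0 := by exact_mod_cast Nat.succ_ne_zero (n + 1)
  have factorial_add_two : ((n + 2).factorial : K) = (n + 2) * (n + 1) * n.factorial := by
    norm_cast
    rw [Nat.factorial_succ, Nat.factorial_succ, mul_assoc]
  rw [prod_factorial_add_single, factorial_add_two, Nat.cast_mul, Nat.cast_succ]
  field_simp
  linear_combination multinomial_spec

theorem sphereIntegral_monomial_mul_conj_mul_cinner_pow {n : ℕ} {α : Fin 2 → ℕ}
    (hα : ∑ i, α i = n + 1) (k : Fin 2) (w : Fin 2 → ℂ) :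
    sphereIntegral (fun v => (∏ i, v i ^ α i) * (conj (v k) * cinner v w ^ n)) =
      4 * Real.pi / ((n + 1) * (n + 2)) *
        (α k * ∏ i, w i ^ (α - Pi.single k 1 : Fin 2 → ℕ) i) := by
  have expand (v : Fin 2 → ℂ) : (∏ i, v i ^ α i) * (conj (v k) * cinner v w ^ n) =
      ∑ β ∈ Finset.univ.piAntidiag n, Nat.multinomial Finset.univ β * (∏ i, w i ^ β i) *
        ((∏ i, v i ^ α i) * ∏ i, conj (v i) ^ (β + Pi.single k 1 : Fin 2 → ℕ) i) := by
    simp only [cinner_pow, Finset.mul_sum, prod_pow_add_single]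
    exact Finset.sum_congr rfl fun β _ => by ring
  have moment (β : Fin 2 → ℕ) (hβ : β ∈ Finset.univ.piAntidiag n) :=
    sphereIntegral_monomial_mul_conj_monomial (α := α) (β := β + Pi.single k 1) (by
      simp [hα, Finset.sum_add_distrib, (Finset.mem_piAntidiag.mp hβ).1])
  simp only [expand]
  rw [sphereIntegral_finsetSum _ fun β _ => by fun_prop]
  simp only [sphereIntegral_const_mul]
  rw [Finset.sum_congr rfl fun β hβ => congrArg _ (moment β hβ)]
  rcases Nat.eq_zero_or_pos (α k) with hk | hk
  · have ne_add_single (β : Fin 2 → ℕ) : α ≠ β + Pi.single k 1 := fun h => by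
      simp [h] at hk
    simp [hk, ne_add_single]
  · have single_le : Pi.single k 1 ≤ α := fun i => by
      rcases eq_or_ne i k with rfl | hi
      · simpa using Nat.succ_le_of_lt hk
      · simp [hi]
    obtain ⟨γ, hγ⟩ : ∃ γ, α = γ + Pi.single k 1 :=
      ⟨α - Pi.single k 1, (tsub_add_cancel_of_le single_le).symm⟩
    subst hγ
    have sum_γ : ∑ i, γ i = n := by simpa [Finset.sum_add_distrib] using hα
    have mem : γ ∈ Finset.univ.piAntidiag n := by simp [sum_γ]
    have apply_k : (γ + Pi.single k 1 : Fin 2 → ℕ) k = γ k + 1 := by simp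
    simp only [add_left_inj, hα, mul_ite, mul_zero, Finset.sum_ite_eq, mem, if_true,
      add_tsub_cancel_right, apply_k, Nat.cast_succ]
    linear_combination (4 * Real.pi * ∏ i, w i ^ γ i) *
      multinomial_mul_prod_factorial_add_single_div (K := ℂ) sum_γ k

theorem sphereIntegral_eval_mul_conj_mul_cinner_pow {n : ℕ} {f : MvPolynomial (Fin 2) ℂ}
    (hf : f.IsHomogeneous (n + 1)) (k : Fin 2) (w : Fin 2 → ℂ) :
    sphereIntegral (fun v => MvPolynomial.eval v f * (conj (v k) * cinner v w ^ n)) =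
      4 * Real.pi / ((n + 1) * (n + 2)) * MvPolynomial.eval w (MvPolynomial.pderiv k f) := by
  have eval_pderiv : MvPolynomial.eval w (MvPolynomial.pderiv k f) =
      ∑ s ∈ f.support, f.coeff s * (s k * ∏ i, w i ^ (⇑s - Pi.single k 1 : Fin 2 → ℕ) i) := by
    conv_lhs => rw [f.as_sum]
    simp only [map_sum, MvPolynomial.pderiv_monomial, MvPolynomial.eval_monomial, mul_assoc,
      Finsupp.prod_fintype _ _ fun i => pow_zero (w i), Finsupp.coe_tsub,
      Finsupp.single_eq_pi_single]
  have degree_eq {s : Fin 2 →₀ ℕ} (hs : s ∈ f.support) : ∑ i, s i = n + 1 := by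
    rw [← Finsupp.degree_eq_sum]
    exact not_imp_comm.mp hf.coeff_eq_zero (MvPolynomial.mem_support_iff.mp hs)
  rw [eval_pderiv, Finset.mul_sum]
  simp only [MvPolynomial.eval_eq', Finset.sum_mul, mul_assoc]
  rw [sphereIntegral_finsetSum _ fun s _ => by fun_prop]
  refine Finset.sum_congr rfl fun s hs => ?_
  rw [sphereIntegral_const_mul, sphereIntegral_monomial_mul_conj_mul_cinner_pow (degree_eq hs),
    mul_left_comm]

theorem pderiv_toMvPolynomial {R m n : Type*} [CommSemiring R] [Fintype n]
    (M : Matrix m n R) (i : m) (j : n) :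
    MvPolynomial.pderiv j (M.toMvPolynomial i) = MvPolynomial.C (M i j) := by
  classical
  rw [Matrix.toMvPolynomial, map_sum, Finset.sum_eq_single j]
  · simp [MvPolynomial.pderiv_monomial]
  · intro k _ hkj
    simp [MvPolynomial.pderiv_monomial, hkj]
  · simp

theorem sphereIntegral_cinner_mulVec_mul_cinner_pow_mul_cinner_pow
    (M : Matrix (Fin 2) (Fin 2) ℂ) (n : ℕ) (u w : Fin 2 → ℂ) :
    sphereIntegral (fun v => cinner v (M *ᵥ v) * cinner u v ^ n * cinner v w ^ n) =
      4 * Real.pi / ((n + 1) * (n + 2)) *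
        (M.trace * cinner u w ^ n + n * cinner u (M *ᵥ w) * cinner u w ^ (n - 1)) := by
  let ℓ : MvPolynomial (Fin 2) ℂ := (Matrix.replicateRow Unit (star u)).toMvPolynomial ()
  let f (k : Fin 2) : MvPolynomial (Fin 2) ℂ := M.toMvPolynomial k * ℓ ^ n
  have homogeneous_f (k : Fin 2) : (f k).IsHomogeneous (n + 1) := by
    have := (M.toMvPolynomial_isHomogeneous k).mul
      (((Matrix.replicateRow Unit (star u)).toMvPolynomial_isHomogeneous ()).pow n)
    rwa [one_mul, add_comm] at this
  have eval_ℓ (v : Fin 2 → ℂ) : MvPolynomial.eval v ℓ = cinner u v :=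
    Matrix.toMvPolynomial_eval_eq_apply ..
  have eval_pderiv_f (k : Fin 2) : MvPolynomial.eval w (MvPolynomial.pderiv k (f k)) =
      M k k * cinner u w ^ n + n * (conj (u k) * (M *ᵥ w) k) * cinner u w ^ (n - 1) := by
    simp only [f, MvPolynomial.pderiv_mul, MvPolynomial.pderiv_pow, map_add, map_mul, map_pow,
      eval_ℓ, Matrix.toMvPolynomial_eval_eq_apply, pderiv_toMvPolynomial, map_natCast,
      MvPolynomial.eval_C]
    simp only [ℓ, pderiv_toMvPolynomial, MvPolynomial.eval_C, Matrix.replicateRow_apply,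
      Pi.star_apply, starRingEnd_apply]
    ring
  have expand (v : Fin 2 → ℂ) : cinner v (M *ᵥ v) * cinner u v ^ n * cinner v w ^ n =
      ∑ k, MvPolynomial.eval v (f k) * (conj (v k) * cinner v w ^ n) := by
    simp only [f, map_mul, map_pow, eval_ℓ, Matrix.toMvPolynomial_eval_eq_apply]
    rw [cinner, Finset.sum_mul, Finset.sum_mul]
    exact Finset.sum_congr rfl fun k _ => by ring
  simp only [expand]
  rw [sphereIntegral_finsetSum _ fun k _ => by
    have := MvPolynomial.continuous_eval (f k)
    fun_prop]
  simp only [sphereIntegral_eval_mul_conj_mul_cinner_pow (homogeneous_f _), eval_pderiv_f]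
  rw [← Finset.mul_sum, Finset.sum_add_distrib, ← Finset.sum_mul, ← Finset.sum_mul,
    ← Finset.mul_sum]
  rfl

theorem coherent_state_X_representation_general (n : ℕ) (u w : Fin 2 → ℂ) (a : Fin 3) :
    cinner (tpow n u) (Jmat n a *ᵥ tpow n w) =
      ((n : ℂ) + 1) * ((n : ℂ) + 2) / (8 * (Real.pi : ℂ)) *
        ∫ φ in (0 : ℝ)..(2 * Real.pi), ∫ θ in (0 : ℝ)..Real.pi,
          (xpt θ φ a : ℂ) * cinner (tpow n u) (tpow n (vcoh θ φ)) *
            cinner (tpow n (vcoh θ φ)) (tpow n w) * (Real.sin θ : ℂ) := by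
  simp only [cinner_tpow_Jmat_mulVec_tpow, cinner_tpow, xpt_eq_cinner_vcoh_pauli]
  change _ = _ * sphereIntegral
    (fun v => cinner v (pauli a *ᵥ v) * cinner u v ^ n * cinner v w ^ n)
  rw [sphereIntegral_cinner_mulVec_mul_cinner_pow_mul_cinner_pow, trace_pauli]
  have pi_ne_zero : (Real.pi : ℂ) ≠ 0 := Complex.ofReal_ne_zero.mpr Real.pi_ne_zero
  have succ_ne_zero : (n : ℂ) + 1 ≠ 0 := Nat.cast_add_one_ne_zero n
  have add_two_ne_zero : (n : ℂ) + 2 ≠ 0 := by exact_mod_cast Nat.succ_ne_zero (n + 1)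
  field_simp
  ring

/-- the coherent-state integral representation
    J_a = (N(N+1)/8π) ∫_{S²} x_a |x⟩⟨x| dx of the fuzzy sphere coordinate
    operators, evaluated between arbitrary coherent states ξ(θ,φ) = v(θ,φ)^{⊗(N−1)}. -/
theorem coherent_state_X_representation (N : ℕ) (hN : 2 ≤ N) (θ₁ φ₁ θ₂ φ₂ : ℝ) (a : Fin 3) :
    cinner (tpow (N - 1) (vcoh θ₁ φ₁))
        ((Jmat (N - 1) a).mulVec (tpow (N - 1) (vcoh θ₂ φ₂)))
      = ((N : ℂ) * ((N : ℂ) + 1) / (8 * (Real.pi : ℂ))) *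
        ∫ φ in (0:ℝ)..(2 * Real.pi), ∫ θ in (0:ℝ)..Real.pi,
          (xpt θ φ a : ℂ) *
            cinner (tpow (N - 1) (vcoh θ₁ φ₁)) (tpow (N - 1) (vcoh θ φ)) *
            cinner (tpow (N - 1) (vcoh θ φ)) (tpow (N - 1) (vcoh θ₂ φ₂)) *
            (Real.sin θ : ℂ) := by
  obtain ⟨n, rfl⟩ : ∃ n, N = n + 1 := ⟨N - 1, by omega⟩
  simpa [add_assoc, one_add_one_eq_two] using
    coherent_state_X_representation_general n (vcoh θ₁ φ₁) (vcoh θ₂ φ₂) a
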